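/- Let C = {f ∈ F : φ(f) = f} be algebraically closed of characteristic 0. If M is an irreducible finite-dimensional D-module whose restriction to D_t is reducible for some t ≥ 1, then the restriction of M to D_p is reducible for some prime p dividing gcd(t, dim_F M). -/

import Mathlib

/-- The fixed field `C = {f ∈ F : φ(f) = f}` of a field automorphism `φ`. -/
def fixedSubfield {F : Type*} [Field F] (φ : F ≃+* F) : Subfield F where
  carrier := {f | φ f = f}
  mul_mem' := by intro a b ha hb; simp only [Set.mem_setOf_eq] at *; rw [map_mul, ha, hb]
  one_mem' := by simp [Set.mem_setOf_eq]
  add_mem' := by intro a b ha hb; simp only [Set.mem_setOf_eq] at *; rw [map_add, ha, hb]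
  zero_mem' := by simp [Set.mem_setOf_eq]
  neg_mem' := by intro a ha; simp only [Set.mem_setOf_eq] at *; rw [map_neg, ha]
  inv_mem' := by intro a ha; simp only [Set.mem_setOf_eq] at *; rw [map_inv₀, ha]

/-- A subspace `p` is stable under the (semilinear) action `g`. -/
def DiffStab {F V : Type*} [Field F] [AddCommGroup V] [Module F V]
    (g : V → V) (p : Submodule F V) : Prop :=
  ∀ x ∈ p, g x ∈ p

section Helpers

variable {F V : Type*} [Field F] [AddCommGroup V] [Module F V]

/-- Preimage of a subspace under a semilinear bijection. -/
def pullSub (ψ : F ≃+* F) (B : V ≃+ V) (h : ∀ (f : F) (v : V), B (f • v) = ψ f • B v)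
    (X : Submodule F V) : Submodule F V where
  carrier := {v | B v ∈ X}
  add_mem' := by
    intro a b ha hb
    simp only [Set.mem_setOf_eq, map_add] at *
    exact X.add_mem ha hb
  zero_mem' := by simp
  smul_mem' := by
    intro c x hx
    simp only [Set.mem_setOf_eq, h] at *
    exact X.smul_mem _ hx

theorem mem_pullSub (ψ : F ≃+* F) (B : V ≃+ V) (h : ∀ (f : F) (v : V), B (f • v) = ψ f • B v)
    (X : Submodule F V) (v : V) : v ∈ pullSub ψ B h X ↔ B v ∈ X := Iff.rfl

theorem symm_semi (φ : F ≃+* F) (A : V ≃+ V) (hA : ∀ (f : F) (v : V), A (f • v) = φ f • A v) :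
    ∀ (f : F) (v : V), A.symm (f • v) = φ.symm f • A.symm v := by
  intro f v
  apply A.injective
  simp [hA]

theorem iter_semi (φ : F ≃+* F) (A : V ≃+ V) (hA : ∀ (f : F) (v : V), A (f • v) = φ f • A v)
    (t : ℕ) (x y : V) : (⇑A)^[t] (x + y) = (⇑A)^[t] x + (⇑A)^[t] y := by
  induction t generalizing x y with
  | zero => rfl
  | succ n ih => simp [Function.iterate_succ_apply, ih]

/-- Semisimplicity of the restriction. -/
theorem exists_stable_compl [FiniteDimensional F V] (φ : F ≃+* F)
    (A : V ≃+ V) (hA : ∀ (f : F) (v : V), A (f • v) = φ f • A v)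
    (hnt : Nontrivial V)
    (hirr : ∀ p : Submodule F V, DiffStab ⇑A p → p = ⊥ ∨ p = ⊤)
    (t : ℕ) (p₀ : Submodule F V) (hp₀ : DiffStab ((⇑A)^[t]) p₀) :
    ∃ U : Submodule F V, DiffStab ((⇑A)^[t]) U ∧ IsCompl p₀ U := by
  have hsup : ∀ X Y : Submodule F V, DiffStab ((⇑A)^[t]) X → DiffStab ((⇑A)^[t]) Y →
      DiffStab ((⇑A)^[t]) (X ⊔ Y) := by
    intro X Y hX hY v hv
    obtain ⟨x, hx, y, hy, rfl⟩ := Submodule.mem_sup.1 hv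
    rw [iter_semi φ A hA]
    exact Submodule.add_mem_sup (hX x hx) (hY y hy)
  have hinf : ∀ X Y : Submodule F V, DiffStab ((⇑A)^[t]) X → DiffStab ((⇑A)^[t]) Y →
      DiffStab ((⇑A)^[t]) (X ⊓ Y) := by
    intro X Y hX hY v hv
    exact ⟨hX v hv.1, hY v hv.2⟩
  have hAs := symm_semi φ A hA
  have hcomm : ∀ v, A ((⇑A)^[t] v) = (⇑A)^[t] (A v) := fun v => by
    rw [← Function.iterate_succ_apply, Function.iterate_succ_apply']
  have hcomm' : ∀ v, A.symm ((⇑A)^[t] v) = (⇑A)^[t] (A.symm v) := fun v => by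
    apply A.injective
    rw [hcomm]; simp
  let S : Set (Submodule F V) := {W | DiffStab ((⇑A)^[t]) W ∧ W ≠ ⊥ ∧
    ∀ X, DiffStab ((⇑A)^[t]) X → X ≤ W → X = ⊥ ∨ X = W}
  have hSne : ∃ W, W ∈ S := by
    obtain ⟨W, hW, hmin⟩ := (wellFounded_lt (α := Submodule F V)).has_min
      {W | DiffStab ((⇑A)^[t]) W ∧ W ≠ ⊥} ⟨⊤, fun _ _ => trivial, top_ne_bot⟩
    refine ⟨W, hW.1, hW.2, fun X hX hle => ?_⟩
    by_contra! hc
    exact hmin X ⟨hX, hc.1⟩ (lt_of_le_of_ne hle hc.2)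
  have hSmap : ∀ W ∈ S, pullSub φ.symm A.symm hAs W ∈ S := by
    rintro W ⟨h1, h2, h3⟩
    refine ⟨?_, ?_, ?_⟩
    · intro v hv
      rw [mem_pullSub] at *
      rw [hcomm']
      exact h1 _ hv
    · obtain ⟨w, hw, hw0⟩ := (Submodule.ne_bot_iff _).1 h2
      refine (Submodule.ne_bot_iff _).2 ⟨A w, ?_, by simpa using hw0⟩
      rw [mem_pullSub]; simpa using hw
    · intro X hX hle
      have k1 : DiffStab ((⇑A)^[t]) (pullSub φ A hA X) := by
        intro v hv
        rw [mem_pullSub] at hv ⊢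
        rw [hcomm]
        exact hX _ hv
      have k2 : pullSub φ A hA X ≤ W := by
        intro v hv
        have := hle hv
        rw [mem_pullSub] at this
        simpa using this
      rcases h3 (pullSub φ A hA X) k1 k2 with h | h
      · left
        rw [Submodule.eq_bot_iff] at h ⊢
        intro x hx
        have := h (A.symm x) (by rw [mem_pullSub]; simpa using hx)
        simpa using this
      · right
        apply le_antisymm hle
        intro x hx
        rw [mem_pullSub, ← h, mem_pullSub] at hx
        simpa using hx
  have hStop : sSup S = ⊤ := by
    refine (hirr (sSup S) ?_).resolve_left ?_
    · have : sSup S ≤ pullSub φ A hA (sSup S) := by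
        apply sSup_le
        intro W hW x hx
        rw [mem_pullSub]
        apply le_sSup (hSmap W hW)
        rw [mem_pullSub]; simpa using hx
      exact fun x hx => this hx
    · obtain ⟨W, hW⟩ := hSne
      intro h
      exact hW.2.1 (eq_bot_iff.2 (h ▸ le_sSup hW))
  obtain ⟨U, hU, hmax⟩ := (wellFounded_gt (α := Submodule F V)).has_min
      {U | DiffStab ((⇑A)^[t]) U ∧ Disjoint p₀ U} ⟨⊥, by
        intro v hv
        rw [Submodule.mem_bot] at *
        subst hv
        have := iter_semi φ A hA t 0 0
        simpa using this, disjoint_bot_right⟩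
  refine ⟨U, hU.1, hU.2, ?_⟩
  rw [codisjoint_iff]
  by_contra hne
  have : ∃ W ∈ S, ¬ W ≤ p₀ ⊔ U := by
    by_contra! hc
    exact hne (eq_top_iff.2 (hStop ▸ sSup_le hc))
  obtain ⟨W, hW, hWn⟩ := this
  have hd : Disjoint (p₀ ⊔ U) W := by
    rw [disjoint_iff]
    rcases hW.2.2 _ (hinf _ _ (hsup _ _ hp₀ hU.1) hW.1) inf_le_right with h | h
    · exact h
    · exact absurd (inf_eq_right.1 h) hWn
  refine hmax (U ⊔ W) ⟨hsup _ _ hU.1 hW.1, ?_⟩ ?_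
  · exact Disjoint.disjoint_sup_right_of_disjoint_sup_left hU.2 hd
  · refine lt_of_le_of_ne le_sup_left fun h => hWn ?_
    exact (le_sup_right.trans h.ge).trans le_sup_right

/-- Eigenvector decomposition for finite-order operators. -/
theorem avg_decomp {N : Type*} [AddCommGroup N] [Module F N] [CharZero F] (n : ℕ) (hn : 0 < n)
    (ζ : F) (hζ : IsPrimitiveRoot ζ n) (T : N →+ N) (hT : ∀ v, T (ζ • v) = ζ • T v)
    (v : N) (hTn : (⇑T)^[n] v = v) :
    ∃ w : ℕ → N, (∀ k, ζ ^ k • T (w k) = w k) ∧ v = ∑ k ∈ Finset.range n, w k := by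
  have hTk : ∀ (k : ℕ) (v), T (ζ ^ k • v) = ζ ^ k • T v := by
    intro k
    induction k with
    | zero => simp
    | succ k ih => intro v; rw [pow_succ, mul_smul, ih, hT, ← mul_smul]
  have hn0 : (n : F) ≠ 0 := by exact_mod_cast hn.ne'
  have hTn' : ∀ v, T ((n : F)⁻¹ • v) = (n : F)⁻¹ • T v := by
    intro v
    exact map_inv_natCast_smul T F F n v
  refine ⟨fun k => (n : F)⁻¹ • ∑ i ∈ Finset.range n, ζ ^ (k * i) • (⇑T)^[i] v, ?_, ?_⟩
  · intro k
    simp only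
    rw [hTn', smul_comm, map_sum]
    congr 1
    rw [Finset.smul_sum]
    have h1 : ∀ i, ζ ^ k • T (ζ ^ (k * i) • (⇑T)^[i] v) = ζ ^ (k * (i + 1)) • (⇑T)^[i + 1] v := by
      intro i
      rw [hTk, ← mul_smul, ← pow_add, Function.iterate_succ_apply']
      congr 2; ring
    simp only [h1]
    have h2 := Finset.sum_range_succ (fun i => ζ ^ (k * i) • (⇑T)^[i] v) n
    rw [Finset.sum_range_succ'] at h2
    have h3 : ζ ^ (k * n) = 1 := by rw [mul_comm, pow_mul, hζ.pow_eq_one, one_pow]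
    simp only [h3, hTn, mul_zero, pow_zero, one_smul, Function.iterate_zero, id] at h2
    exact add_right_cancel h2
  · rw [← Finset.smul_sum, Finset.sum_comm]
    simp only [← Finset.sum_smul]
    rw [Finset.sum_eq_single 0]
    · simp [smul_smul, hn0]
    · intro i hi hi0
      have hne : ζ ^ i ≠ 1 := hζ.pow_ne_one_of_pos_of_lt hi0 (Finset.mem_range.1 hi)
      have h1 := mul_geom_sum (ζ ^ i) n
      rw [← pow_mul, mul_comm i n, pow_mul, hζ.pow_eq_one, one_pow, sub_self] at h1
      have h2 := (mul_eq_zero.1 h1).resolve_left (sub_ne_zero.2 hne)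
      simp only [← pow_mul] at h2
      simp only [mul_comm _ i]
      rw [h2, zero_smul]
    · intro h; exact absurd (Finset.mem_range.2 hn) h

/-- Schur's lemma. -/
theorem schur_scalar [FiniteDimensional F V] (φ : F ≃+* F) [IsAlgClosed (fixedSubfield φ)]
    (A : V ≃+ V) (hA : ∀ (f : F) (v : V), A (f • v) = φ f • A v)
    (hnt : Nontrivial V)
    (hirr : ∀ p : Submodule F V, DiffStab ⇑A p → p = ⊥ ∨ p = ⊤)
    (g : Module.End F V) (hg : ∀ v, A (g v) = g (A v)) :
    ∃ c : fixedSubfield φ, ∀ v, g v = (c : F) • v := by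
  have hpow : ∀ (k : ℕ) v, A ((g ^ k) v) = (g ^ k) (A v) := by
    intro k
    induction k with
    | zero => simp
    | succ k ih => intro v; rw [pow_succ, Module.End.mul_apply, ih, hg]; rfl
  have hpoly : ∀ (P : Polynomial F) v,
      A (Polynomial.aeval g P v) = Polynomial.aeval g (P.map (φ : F →+* F)) (A v) := by
    intro P v
    induction P using Polynomial.induction_on' with
    | add p q hp hq => simp [hp, hq]
    | monomial n a => simp [Polynomial.aeval_monomial, hA, hpow]
  have hint : IsIntegral F g := Algebra.IsIntegral.isIntegral g
  have hmon := minpoly.monic hint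
  have hmap : (minpoly F g).map (φ : F →+* F) = minpoly F g := by
    symm
    apply Polynomial.eq_of_dvd_of_natDegree_le_of_leadingCoeff
    · apply minpoly.dvd
      ext v
      have := hpoly (minpoly F g) (A.symm v)
      simpa using this.symm
    · rw [Polynomial.natDegree_map]
    · rw [hmon.leadingCoeff, (hmon.map _).leadingCoeff]
  have hlift : ∃ Q : Polynomial (fixedSubfield φ), Q.map (fixedSubfield φ).subtype = minpoly F g := by
    rw [← Polynomial.mem_lifts, Polynomial.lifts_iff_coeff_lifts]
    intro n
    have : φ ((minpoly F g).coeff n) = (minpoly F g).coeff n := by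
      conv_rhs => rw [← hmap]
      simp
    exact ⟨⟨_, this⟩, rfl⟩
  obtain ⟨Q, hQ⟩ := hlift
  have hdeg : Q.degree ≠ 0 := by
    rw [← Polynomial.degree_map Q (fixedSubfield φ).subtype, hQ]
    exact (minpoly.degree_pos hint).ne'
  obtain ⟨c, hc⟩ := IsAlgClosed.exists_root Q hdeg
  have hroot : (minpoly F g).IsRoot (c : F) := by
    rw [← hQ]
    exact hc.map (f := (fixedSubfield φ).subtype)
  have hev := Module.End.hasEigenvalue_of_isRoot hroot
  have hcφ : φ (c : F) = c := c.2
  have htop : Module.End.eigenspace g (c : F) = ⊤ := by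
    refine (hirr _ ?_).resolve_left hev
    intro x hx
    rw [Module.End.mem_eigenspace_iff] at *
    rw [← hg, hx, hA, hcφ]
  refine ⟨c, fun v => ?_⟩
  rw [← Module.End.mem_eigenspace_iff, htop]
  trivial

/-- Conjugation by `A`. -/
def conjA (φ : F ≃+* F) (A : V ≃+ V) (hA : ∀ (f : F) (v : V), A (f • v) = φ f • A v) :
    Module.End F V →+ Module.End F V where
  toFun e :=
    { toFun := fun v => A (e (A.symm v))
      map_add' := by intro x y; simp
      map_smul' := by intro c x; simp [symm_semi φ A hA, hA] }
  map_zero' := by ext; simp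
  map_add' := by intro x y; ext; simp

theorem conjA_apply (φ : F ≃+* F) (A : V ≃+ V) (hA : ∀ (f : F) (v : V), A (f • v) = φ f • A v)
    (e : Module.End F V) (v : V) : conjA φ A hA e v = A (e (A.symm v)) := rfl

theorem conjA_iter (φ : F ≃+* F) (A : V ≃+ V) (hA : ∀ (f : F) (v : V), A (f • v) = φ f • A v)
    (e : Module.End F V) (n : ℕ) (v : V) :
    ((⇑(conjA φ A hA))^[n] e) ((⇑A)^[n] v) = (⇑A)^[n] (e v) := by
  induction n generalizing v with
  | zero => rfl
  | succ n ih =>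
    rw [Function.iterate_succ_apply', conjA_apply, Function.iterate_succ_apply' (⇑A),
      A.symm_apply_apply, ih, Function.iterate_succ_apply']

/-- Existence of a twisted-commuting endomorphism. -/
theorem exists_twist [CharZero F] [FiniteDimensional F V] (φ : F ≃+* F)
    [IsAlgClosed (fixedSubfield φ)]
    (A : V ≃+ V) (hA : ∀ (f : F) (v : V), A (f • v) = φ f • A v)
    (hnt : Nontrivial V)
    (hirr : ∀ p : Submodule F V, DiffStab ⇑A p → p = ⊥ ∨ p = ⊤)
    (t : ℕ) (ht : 1 ≤ t)
    (p₀ : Submodule F V) (hp₀ : DiffStab ((⇑A)^[t]) p₀)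
    (hp₀bot : p₀ ≠ ⊥) (hp₀top : p₀ ≠ ⊤) :
    ∃ (e : Module.End F V) (z : F), e ≠ 0 ∧ φ z = z ∧ z ^ t = 1 ∧ z ≠ 1 ∧
      ∀ v, e (A v) = z • A (e v) := by
  obtain ⟨U, hU, hc⟩ := exists_stable_compl φ A hA hnt hirr t p₀ hp₀
  have : NeZero t := ⟨by omega⟩
  have : NeZero (t : fixedSubfield φ) := ⟨by exact_mod_cast this.1⟩
  obtain ⟨ζ', hζ'⟩ := HasEnoughRootsOfUnity.exists_primitiveRoot (fixedSubfield φ) t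
  have hζ : IsPrimitiveRoot (ζ' : F) t :=
    hζ'.map_of_injective (f := (fixedSubfield φ).subtype) Subtype.val_injective
  have hζφ : φ (ζ' : F) = ζ' := ζ'.2
  generalize (ζ' : F) = ζ at hζ hζφ
  have hσs : ∀ (c : F), φ c = c → ∀ e, conjA φ A hA (c • e) = c • conjA φ A hA e := by
    intro c hc e
    ext v
    simp [conjA_apply, hA, hc]
  let π := p₀.projection U hc
  have hπ : (⇑(conjA φ A hA))^[t] π = π := by
    have hs : Function.Surjective ((⇑A)^[t]) := A.surjective.iterate t
    ext v
    obtain ⟨v, rfl⟩ := hs v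
    rw [conjA_iter]
    have hv : v ∈ p₀ ⊔ U := by rw [hc.sup_eq_top]; trivial
    obtain ⟨x, hx, y, hy, rfl⟩ := Submodule.mem_sup.1 hv
    rw [iter_semi φ A hA]
    simp only [π, map_add]
    rw [Submodule.projection_apply_of_mem_left hc hx,
      Submodule.projection_apply_of_mem_right hc hy,
      Submodule.projection_apply_of_mem_left hc (hp₀ x hx),
      Submodule.projection_apply_of_mem_right hc (hU y hy)]
    simp
  obtain ⟨w, hw, hsum⟩ := avg_decomp t ht ζ hζ (conjA φ A hA) (hσs ζ hζφ) π hπ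
  have hw' : ∀ k v, w k (A v) = ζ ^ k • A (w k v) := by
    intro k v
    have := congrArg (fun e : Module.End F V => e (A v)) (hw k)
    simp only [LinearMap.smul_apply, conjA_apply, A.symm_apply_apply] at this
    exact this.symm
  by_cases hall : ∀ k ∈ Finset.range t, k ≠ 0 → w k = 0
  · exfalso
    have hπ0 : π = w 0 := by
      rw [hsum]
      exact Finset.sum_eq_single 0 hall (fun h => absurd (Finset.mem_range.2 ht) h)
    have hU' : DiffStab (⇑A) U := by
      intro x hx
      rw [← Submodule.projection_apply_eq_zero_iff hc] at *
      change π _ = 0 at hx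
      change π _ = 0
      rw [hπ0] at *
      rw [hw', hx]; simp
    rcases hirr U hU' with h | h
    · rw [h] at hc
      exact hp₀top (eq_top_of_isCompl_bot hc)
    · rw [h] at hc
      exact hp₀bot (eq_bot_of_isCompl_top hc)
  · push Not at hall
    obtain ⟨k, hk, hk0, hwk⟩ := hall
    refine ⟨w k, ζ ^ k, hwk, by rw [map_pow, hζφ], ?_, ?_, hw' k⟩
    · rw [← pow_mul, mul_comm, pow_mul, hζ.pow_eq_one, one_pow]
    · exact hζ.pow_ne_one_of_pos_of_lt hk0 (Finset.mem_range.1 hk)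

/-- The final step: an operator `u` with `u ^ p = 1` twisted-commuting with `A`. -/
theorem final_step [CharZero F] [FiniteDimensional F V] (φ : F ≃+* F)
    (A : V ≃+ V) (hA : ∀ (f : F) (v : V), A (f • v) = φ f • A v)
    (hnt : Nontrivial V) (p : ℕ) (hp : p.Prime) (u : Module.End F V) (z : F)
    (hz : IsPrimitiveRoot z p) (hφ : φ z = z) (hu : u ^ p = 1)
    (huA : ∀ v, u (A v) = z • A (u v)) :
    p ∣ Module.finrank F V ∧
      ∃ q : Submodule F V, DiffStab ((⇑A)^[p]) q ∧ q ≠ ⊥ ∧ q ≠ ⊤ := by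
  classical
  have hz0 : z ≠ 0 := hz.ne_zero hp.ne_zero
  have hφk : ∀ k : ℕ, φ (z ^ k) = z ^ k := fun k => by rw [map_pow, hφ]
  let E : ℕ → Submodule F V := fun k => Module.End.eigenspace u (z ^ k)
  have hmem : ∀ k v, v ∈ E k ↔ u v = z ^ k • v := fun k v => Module.End.mem_eigenspace_iff
  have hstep : ∀ k v, v ∈ E k ↔ A v ∈ E (k + 1) := by
    intro k v
    rw [hmem, hmem, huA, pow_succ', mul_smul, smul_right_inj hz0, ← hφk, ← hA,
      A.injective.eq_iff, hφk]
  have hper : E p = E 0 := by simp only [E, hz.pow_eq_one, pow_zero]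
  have hrank : ∀ k, Module.finrank F (E (k + 1)) = Module.finrank F (E k) := by
    intro k
    let j : E k ≃+ E (k + 1) :=
      { toFun := fun v => ⟨A v, (hstep k v).1 v.2⟩
        invFun := fun v => ⟨A.symm v, (hstep k _).2 (by simp)⟩
        left_inv := by intro v; simp
        right_inv := by intro v; simp
        map_add' := by intro x y; ext; simp }
    have := rank_eq_of_equiv_equiv (R := F) (R' := F) φ j φ.bijective
      (by intro r m; ext; simp [j, hA])
    simp only [Module.finrank, this]
  have hrank0 : ∀ k, Module.finrank F (E k) = Module.finrank F (E 0) := by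
    intro k
    induction k with
    | zero => rfl
    | succ k ih => rw [hrank, ih]
  have hind : iSupIndep (fun i : Fin p => E i) := by
    refine (Module.End.eigenspaces_iSupIndep u).comp (f := fun i : Fin p => z ^ (i : ℕ)) ?_
    intro i j hij
    exact Fin.ext (hz.pow_inj i.2 j.2 hij)
  have htop : ⨆ i : Fin p, E i = ⊤ := by
    rw [eq_top_iff]
    intro v _
    have hzi : IsPrimitiveRoot z⁻¹ p := hz.inv
    obtain ⟨w, hw, hsum⟩ := avg_decomp p hp.pos z⁻¹ hzi (u : V →ₗ[F] V).toAddMonoidHom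
      (by intro v; simp) v (by
        change (⇑u)^[p] v = v
        rw [← Module.End.pow_apply, hu]; rfl)
    rw [hsum]
    refine Submodule.sum_mem _ fun k hk => ?_
    refine (le_iSup (fun i : Fin p => E i) ⟨k, Finset.mem_range.1 hk⟩) ?_
    change w k ∈ E k
    rw [hmem]
    have h1 := hw k
    change z⁻¹ ^ k • u (w k) = w k at h1
    conv_rhs => rw [← h1]
    rw [smul_smul, ← mul_pow, mul_inv_cancel₀ hz0, one_pow, one_smul]
  have hint := DirectSum.isInternal_submodule_of_iSupIndep_of_iSup_eq_top hind htop
  have hdim : Module.finrank F V = p * Module.finrank F (E 0) := by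
    have e := LinearEquiv.ofBijective (DirectSum.coeLinearMap fun i : Fin p => E i) hint
    rw [← e.finrank_eq, Module.finrank_directSum]
    simp [hrank0]
  refine ⟨⟨_, hdim⟩, E 0, ?_, ?_, ?_⟩
  · intro x hx
    have : ∀ k, (⇑A)^[k] x ∈ E k := by
      intro k
      induction k with
      | zero => exact hx
      | succ k ih => rw [Function.iterate_succ_apply']; exact (hstep k _).1 ih
    rw [← hper]; exact this p
  · intro h
    rw [h, finrank_bot, mul_zero] at hdim
    exact Module.finrank_pos.ne' hdim
  · intro h
    rw [h, finrank_top] at hdim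
    have h1 : 0 < Module.finrank F V := Module.finrank_pos
    have := hp.two_le
    nlinarith

end Helpers

/-- Let the fixed field `C` of `φ` be algebraically closed of characteristic 0.
If `M = (V, A)` is an irreducible finite-dimensional `D`-module whose restriction
to `D_t` (i.e. `(V, A^t)`) is reducible for some `t ≥ 1`, then the restriction of
`M` to `D_p` is reducible for some prime `p` dividing `gcd(t, dim_F M)`. -/
theorem reducible_restriction_at_a_prime
    {F V : Type*} [Field F] [CharZero F]
    (φ : F ≃+* F) [IsAlgClosed (fixedSubfield φ)]
    [AddCommGroup V] [Module F V] [FiniteDimensional F V]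
    (A : V ≃+ V) (hA : ∀ (f : F) (v : V), A (f • v) = φ f • A v)
    (hnt : Nontrivial V)
    (hirr : ∀ p : Submodule F V, DiffStab ⇑A p → p = ⊥ ∨ p = ⊤)
    (t : ℕ) (ht : 1 ≤ t)
    (p₀ : Submodule F V) (hp₀ : DiffStab ((⇑A)^[t]) p₀)
    (hp₀bot : p₀ ≠ ⊥) (hp₀top : p₀ ≠ ⊤) :
    ∃ p : ℕ, p.Prime ∧ p ∣ Nat.gcd t (Module.finrank F V) ∧
      ∃ q : Submodule F V, DiffStab ((⇑A)^[p]) q ∧ q ≠ ⊥ ∧ q ≠ ⊤ := by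
  obtain ⟨e, z, he, hφz, hzt, hz1, heA⟩ :=
    exists_twist φ A hA hnt hirr t ht p₀ hp₀ hp₀bot hp₀top
  have hker : LinearMap.ker e = ⊥ := by
    refine (hirr _ ?_).resolve_right fun h => he (LinearMap.ker_eq_top.1 h)
    intro x hx
    rw [LinearMap.mem_ker] at *
    rw [heA, hx]; simp
  have hinj : Function.Injective e := LinearMap.ker_eq_bot.1 hker
  have hst : orderOf z ∣ t := orderOf_dvd_of_pow_eq_one hzt
  have hs0 : orderOf z ≠ 0 := fun h => by rw [h, zero_dvd_iff] at hst; omega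
  have hs1 : orderOf z ≠ 1 := fun h => hz1 (orderOf_eq_one_iff.1 h)
  obtain ⟨p, hp, hps⟩ := Nat.exists_prime_and_dvd hs1
  obtain ⟨m, hm⟩ := hps
  have hprim : IsPrimitiveRoot (z ^ m) p :=
    (IsPrimitiveRoot.orderOf z).pow (Nat.pos_of_ne_zero hs0) (by rw [hm, mul_comm])
  have hpowA : ∀ (k : ℕ) (v : V), (e ^ k) (A v) = z ^ k • A ((e ^ k) v) := by
    intro k
    induction k with
    | zero => simp
    | succ k ih =>
      intro v
      rw [pow_succ', Module.End.mul_apply, ih, map_smul, heA, smul_smul, ← pow_succ,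
        Module.End.mul_apply]
  have hzs : z ^ (m * p) = 1 := by rw [mul_comm, ← hm, pow_orderOf_eq_one]
  obtain ⟨c, hc⟩ := schur_scalar φ A hA hnt hirr (e ^ (m * p)) (by
    intro v
    rw [hpowA, hzs, one_smul])
  obtain ⟨b, hb⟩ := IsAlgClosed.exists_pow_nat_eq c hp.pos
  have hbF : (b : F) ^ p = c := by rw [← hb]; rfl
  have hbφ : φ (b : F) = b := b.2
  have hc0 : (c : F) ≠ 0 := by
    intro h
    obtain ⟨v, hv⟩ := exists_ne (0 : V)
    have h1 := hc v
    rw [h, zero_smul, Module.End.pow_apply] at h1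
    apply hv
    apply hinj.iterate (m * p)
    rw [h1, ← Module.End.pow_apply, map_zero]
  have hb0 : (b : F) ≠ 0 := by
    intro h
    rw [h, zero_pow hp.ne_zero] at hbF
    exact hc0 hbF.symm
  obtain ⟨h1, h2⟩ := final_step φ A hA hnt p hp ((b : F)⁻¹ • e ^ m) (z ^ m) hprim
    (by rw [map_pow, hφz])
    (by
      ext v
      rw [smul_pow, ← pow_mul, LinearMap.smul_apply, hc, inv_pow, hbF, smul_smul,
        inv_mul_cancel₀ hc0, one_smul]
      rfl)
    (by
      intro v
      rw [LinearMap.smul_apply, LinearMap.smul_apply, hpowA, hA, map_inv₀, hbφ, smul_comm])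
  exact ⟨p, hp, Nat.dvd_gcd ((Dvd.intro _ hm.symm).trans hst) h1, h2⟩
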